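/- arXiv:1306.0435 — 3 statements merged into one kernel-verified Lean document; each statement's English description precedes it below -/
import Mathlib

section
/- Let Q ∈ L²_loc(ℝ,ℂ), τ ∈ L¹_loc(ℝ,ℂ). Let u, w, v, z : ℝ → ℂ be locally absolutely continuous functions such that a.e. u' = w + Qu and v' = z + conj(Q)·v, and define a.e. l[u] := −w' − Q·u' + τ·u and l⁺[v] := −( z' + conj(Q)·z + (conj(Q)² − conj(τ))·v ). Suppose u, v, l[u], l⁺[v] all belong to L²(ℝ). Then, with [u,v](t) := u(t)·conj(z(t)) − w(t)·conj(v(t)), the generalized Lagrange identity holds: ∫_ℝ l[u](x)·conj(v(x)) dx − ∫_ℝ u(x)·conj(l⁺[v](x)) dx = lim_{t→+∞}[u,v](t) − lim_{t→−∞}[u,v](t) (both limits existing and being finite). -/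
open MeasureTheory Filter Topology

/-- The Shin–Zettl quasi-differential expression `l[u] = -(u^{[1]})' - Q u' + τ u`,
written in terms of the quasi-derivative `w = u^{[1]} = u' - Qu` (so that `u' = w + Qu`)
and the a.e. derivative `dw` of `w`. -/
noncomputable def qdL (Q τ u w dw : ℝ → ℂ) (x : ℝ) : ℂ :=
  -dw x - Q x * (w x + Q x * u x) + τ x * u x

/-- The formally adjoint quasi-differential expression
`l⁺[v] = -( (v^{{1}})' + conj(Q) v^{{1}} + (conj(Q)² - conj(τ)) v )`, written in terms of
the adjoint quasi-derivative `z = v^{{1}} = v' - conj(Q)v` and the a.e. derivative `dz`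
of `z`. -/
noncomputable def qdLplus (Q τ v z dz : ℝ → ℂ) (x : ℝ) : ℂ :=
  -(dz x + (starRingEnd ℂ) (Q x) * z x
      + (((starRingEnd ℂ) (Q x)) ^ 2 - (starRingEnd ℂ) (τ x)) * v x)

/-- The bracket `[u,v](t) = u(t) conj(v^{{1}}(t)) - u^{[1]}(t) conj(v(t))`. -/
noncomputable def qdBracket (u w v z : ℝ → ℂ) (t : ℝ) : ℂ :=
  u t * (starRingEnd ℂ) (z t) - w t * (starRingEnd ℂ) (v t)

lemma locInt_ii {f : ℝ → ℂ} (hf : LocallyIntegrable f volume) (a b : ℝ) :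
    IntervalIntegrable f volume a b :=
  (hf.integrableOn_isCompact isCompact_uIcc).intervalIntegrable

/-- The integral of a complex locally integrable function is absolutely continuous. -/
lemma ac_integral_complex {f : ℝ → ℂ} (hf : LocallyIntegrable f volume) (x : ℝ) :
    AbsolutelyContinuousOnInterval (fun t => ∫ s in (0:ℝ)..t, f s) 0 x := by
  have hi : ∀ a b, IntervalIntegrable f volume a b := fun a b => locInt_ii hf a b
  have hre : IntervalIntegrable (fun s => (f s).re) volume 0 x :=
    ⟨(hi 0 x).1.re, (hi 0 x).2.re⟩
  have him : IntervalIntegrable (fun s => (f s).im) volume 0 x :=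
    ⟨(hi 0 x).1.im, (hi 0 x).2.im⟩
  have h1 := hre.absolutelyContinuousOnInterval_intervalIntegral (c := 0) (by simp)
  have h2 := him.absolutelyContinuousOnInterval_intervalIntegral (c := 0) (by simp)
  have hc : ∀ c : ℂ, AbsolutelyContinuousOnInterval (fun _ : ℝ => c) 0 x := fun c =>
    ((LipschitzWith.const c).lipschitzOnWith).absolutelyContinuousOnInterval
  have h3 := (h1.smul (hc 1)).add (h2.smul (hc Complex.I))
  refine Eq.mp (congrArg (fun φ : ℝ → ℂ => AbsolutelyContinuousOnInterval φ 0 x) ?_) h3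
  funext t
  symm
  simp only [Pi.add_apply, Pi.smul_apply', Complex.real_smul, mul_one]
  have hr : (∫ s in (0:ℝ)..t, (f s).re) = (∫ s in (0:ℝ)..t, f s).re := by
    simpa using (Complex.reCLM.intervalIntegral_comp_comm (hi 0 t))
  have hm : (∫ s in (0:ℝ)..t, (f s).im) = (∫ s in (0:ℝ)..t, f s).im := by
    simpa using (Complex.imCLM.intervalIntegral_comp_comm (hi 0 t))
  rw [hr, hm, Complex.re_add_im]

lemma prim_continuous {F f : ℝ → ℂ} (hf : LocallyIntegrable f volume)
    (hF : ∀ x, F x = F 0 + ∫ s in (0:ℝ)..x, f s) : Continuous F := by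
  rw [show F = fun x => F 0 + ∫ s in (0:ℝ)..x, f s from funext hF]
  exact continuous_const.add
    (intervalIntegral.continuous_primitive (fun a b => locInt_ii hf a b) 0)

lemma prim_mul_locInt {F f G g : ℝ → ℂ} (hf : LocallyIntegrable f volume)
    (hF : ∀ x, F x = F 0 + ∫ s in (0:ℝ)..x, f s)
    (hg : LocallyIntegrable g volume)
    (hG : ∀ x, G x = G 0 + ∫ s in (0:ℝ)..x, g s) :
    LocallyIntegrable (fun s => f s * G s + F s * g s) volume := by
  have h1 := hf.smul_continuous (prim_continuous hg hG)
  have h2 := hg.continuous_smul (prim_continuous hf hF)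
  exact h1.add h2

lemma prim_mul {F f G g : ℝ → ℂ} (hf : LocallyIntegrable f volume)
    (hF : ∀ x, F x = F 0 + ∫ s in (0:ℝ)..x, f s)
    (hg : LocallyIntegrable g volume)
    (hG : ∀ x, G x = G 0 + ∫ s in (0:ℝ)..x, g s) (x : ℝ) :
    F x * G x = F 0 * G 0 + ∫ s in (0:ℝ)..x, (f s * G s + F s * g s) := by
  have hloc := prim_mul_locInt hf hF hg hG
  have hc : ∀ c : ℂ, AbsolutelyContinuousOnInterval (fun _ : ℝ => c) 0 x := fun c =>
    ((LipschitzWith.const c).lipschitzOnWith).absolutelyContinuousOnInterval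
  have hFac : AbsolutelyContinuousOnInterval F 0 x := by
    have := (hc (F 0)).add (ac_integral_complex hf x)
    rwa [show ((fun _ : ℝ => F 0) + fun t => ∫ s in (0:ℝ)..t, f s) = F from
      (funext hF).symm] at this
  have hGac : AbsolutelyContinuousOnInterval G 0 x := by
    have := (hc (G 0)).add (ac_integral_complex hg x)
    rwa [show ((fun _ : ℝ => G 0) + fun t => ∫ s in (0:ℝ)..t, g s) = G from
      (funext hG).symm] at this
  have hac := (hFac.smul hGac).sub (ac_integral_complex hloc x)
  obtain ⟨C, hC⟩ := hac.const_of_ae_hasDerivAt_zero (by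
    filter_upwards [_root_.LocallyIntegrable.ae_hasDerivAt_integral hf, _root_.LocallyIntegrable.ae_hasDerivAt_integral hg,
      _root_.LocallyIntegrable.ae_hasDerivAt_integral hloc] with y h1 h2 h3 _
    have hFd : HasDerivAt F (f y) y := by
      rw [show F = fun x => F 0 + ∫ s in (0:ℝ)..x, f s from funext hF]
      exact (h1 0).const_add _
    have hGd : HasDerivAt G (g y) y := by
      rw [show G = fun x => G 0 + ∫ s in (0:ℝ)..x, g s from funext hG]
      exact (h2 0).const_add _
    have := (hFd.mul hGd).sub (h3 0)
    rw [sub_self] at this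
    exact this)
  have e0 := hC 0 (by simp)
  have ex := hC x (by simp)
  simp only [Pi.sub_apply, Pi.smul_apply', smul_eq_mul, Pi.mul_apply, intervalIntegral.integral_same] at e0 ex
  linear_combination ex - e0

lemma prim_conj {G g : ℝ → ℂ} (hg : LocallyIntegrable g volume)
    (hG : ∀ x, G x = G 0 + ∫ s in (0:ℝ)..x, g s) :
    LocallyIntegrable (fun s => (starRingEnd ℂ) (g s)) volume ∧
    ∀ x, (starRingEnd ℂ) (G x) = (starRingEnd ℂ) (G 0) +
      ∫ s in (0:ℝ)..x, (starRingEnd ℂ) (g s) := by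
  constructor
  · intro x
    obtain ⟨U, hU, h⟩ := hg x
    exact ⟨U, hU, (Complex.conjCLE.toContinuousLinearMap).integrable_comp h⟩
  · intro x
    have := (Complex.conjCLE.toContinuousLinearMap).intervalIntegral_comp_comm
      (locInt_ii hg 0 x)
    have h2 : (∫ s in (0:ℝ)..x, (starRingEnd ℂ) (g s))
        = (starRingEnd ℂ) (∫ s in (0:ℝ)..x, g s) := by simpa using this
    rw [h2, ← map_add, ← hG]

/-- Generalized Lagrange identity on the whole line: if `u, v, l[u], l⁺[v]` are all square
integrable, then the bracket `[u,v](t)` has finite limits at `±∞` and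
`∫_ℝ l[u] conj(v) - ∫_ℝ u conj(l⁺[v]) = [u,v](+∞) - [u,v](-∞)`. -/
theorem generalized_lagrange_identity (Q τ u w v z dw dz : ℝ → ℂ)
    (hQmeas : AEStronglyMeasurable Q volume)
    (hQ : LocallyIntegrable (fun s => ‖Q s‖ ^ 2) volume)
    (hτ : LocallyIntegrable τ volume)
    (hu' : LocallyIntegrable (fun s => w s + Q s * u s) volume)
    (hu : ∀ x : ℝ, u x = u 0 + ∫ s in (0:ℝ)..x, (w s + Q s * u s))
    (hv' : LocallyIntegrable (fun s => z s + (starRingEnd ℂ) (Q s) * v s) volume)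
    (hv : ∀ x : ℝ, v x = v 0 + ∫ s in (0:ℝ)..x, (z s + (starRingEnd ℂ) (Q s) * v s))
    (hdw : LocallyIntegrable dw volume)
    (hw : ∀ x : ℝ, w x = w 0 + ∫ s in (0:ℝ)..x, dw s)
    (hdz : LocallyIntegrable dz volume)
    (hz : ∀ x : ℝ, z x = z 0 + ∫ s in (0:ℝ)..x, dz s)
    (huL2 : MemLp u 2 volume) (hvL2 : MemLp v 2 volume)
    (hluL2 : MemLp (qdL Q τ u w dw) 2 volume)
    (hlvL2 : MemLp (qdLplus Q τ v z dz) 2 volume) :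
    ∃ Lm Lp : ℂ, Tendsto (qdBracket u w v z) atBot (𝓝 Lm) ∧
      Tendsto (qdBracket u w v z) atTop (𝓝 Lp) ∧
      (∫ x : ℝ, qdL Q τ u w dw x * (starRingEnd ℂ) (v x))
          - (∫ x : ℝ, u x * (starRingEnd ℂ) (qdLplus Q τ v z dz x))
        = Lp - Lm := by
  obtain ⟨hzc', hzc⟩ := prim_conj hdz hz
  obtain ⟨hvc', hvc⟩ := prim_conj hv' hv
  have i1 : Integrable (fun x => qdL Q τ u w dw x * (starRingEnd ℂ) (v x)) volume :=
    hluL2.integrable_mul (p := 2) (q := 2) hvL2.star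
  have i2 : Integrable (fun x => u x * (starRingEnd ℂ) (qdLplus Q τ v z dz x)) volume :=
    huL2.integrable_mul (p := 2) (q := 2) hlvL2.star
  have hD := i1.sub i2
  set D : ℝ → ℂ := (fun x => qdL Q τ u w dw x * (starRingEnd ℂ) (v x)) -
    fun x => u x * (starRingEnd ℂ) (qdLplus Q τ v z dz x) with hDdef
  have key : ∀ x, qdBracket u w v z x = qdBracket u w v z 0 + ∫ s in (0:ℝ)..x, D s := by
    intro x
    have p1 := prim_mul hu' hu hzc' hzc x
    have p2 := prim_mul hdw hw hvc' hvc x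
    have j1 := locInt_ii (prim_mul_locInt hu' hu hzc' hzc) 0 x
    have j2 := locInt_ii (prim_mul_locInt hdw hw hvc' hvc) 0 x
    have e : ∀ s, D s = ((w s + Q s * u s) * (starRingEnd ℂ) (z s)
        + u s * (starRingEnd ℂ) (dz s)) - (dw s * (starRingEnd ℂ) (v s)
        + w s * (starRingEnd ℂ) (z s + (starRingEnd ℂ) (Q s) * v s)) := by
      intro s
      simp only [hDdef, Pi.sub_apply, qdL, qdLplus, map_neg, map_add, map_mul, map_sub, map_pow,
        Complex.conj_conj]
      ring
    simp only [e]
    rw [intervalIntegral.integral_sub j1 j2]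
    simp only [qdBracket]
    linear_combination p1 - p2
  refine ⟨qdBracket u w v z 0 - ∫ s in Set.Iic (0:ℝ), D s,
    qdBracket u w v z 0 + ∫ s in Set.Ioi (0:ℝ), D s, ?_, ?_, ?_⟩
  · have h := intervalIntegral_tendsto_integral_Iic (0:ℝ) hD.integrableOn
      (tendsto_id (α := ℝ) (x := atBot))
    refine (h.const_sub (qdBracket u w v z 0)).congr fun x => ?_
    rw [key x, id, intervalIntegral.integral_symm 0 x, sub_neg_eq_add]
  · have h := intervalIntegral_tendsto_integral_Ioi (0:ℝ) hD.integrableOn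
      (tendsto_id (α := ℝ) (x := atTop))
    refine (h.const_add (qdBracket u w v z 0)).congr fun x => ?_
    rw [key x, id]
  · rw [← integral_sub i1 i2]
    have h := intervalIntegral.integral_Iic_add_Ioi (b := (0:ℝ)) hD.integrableOn hD.integrableOn
    have h' : (∫ x : ℝ, (qdL Q τ u w dw x * (starRingEnd ℂ) (v x)
        - u x * (starRingEnd ℂ) (qdLplus Q τ v z dz x))) = ∫ x, D x := rfl
    rw [h', ← h]
    ring
end

section
/- Let Q ∈ L²_loc(ℝ,ℂ), τ ∈ L¹_loc(ℝ,ℂ). Let u, w : ℝ → ℂ be locally absolutely continuous with u' = w + Qu a.e., and define a.e. l[u] := −w' − Q·u' + τ·u. Let φ : ℝ → ℝ be smooth with compact support. Then the function φu together with the function w_φ := φ'u + φw is again locally absolutely continuous with (φu)' = w_φ + Q(φu) a.e. (i.e. w_φ is the quasi-derivative of φu), and a.e. l[φu] = φ·l[u] − φ''·u − 2φ'·u'. In particular, if u ∈ L²(ℝ) and l[u] ∈ L²(ℝ), then φu ∈ L²(ℝ) has compact support and l[φu] ∈ L²(ℝ). -/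
open MeasureTheory Filter Topology

/-- The quasi-derivative `(φu)^{[1]} = φ'u + φ u^{[1]}` of the product `φu`. -/
noncomputable def wPhi (u w : ℝ → ℂ) (φ : ℝ → ℝ) (x : ℝ) : ℂ :=
  Complex.ofReal (deriv φ x) * u x + Complex.ofReal (φ x) * w x

/-- The a.e. derivative of `(φu)^{[1]}`, computed from `u' = w + Qu` and `w' = dw`. -/
noncomputable def dwPhi (Q u w dw : ℝ → ℂ) (φ : ℝ → ℝ) (x : ℝ) : ℂ :=
  Complex.ofReal (deriv (deriv φ) x) * u x
    + Complex.ofReal (deriv φ x) * (w x + Q x * u x)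
    + Complex.ofReal (deriv φ x) * w x + Complex.ofReal (φ x) * dw x

lemma aux_ii {E : Type*} [NormedAddCommGroup E] {f : ℝ → E} (hf : LocallyIntegrable f volume)
    {a b : ℝ} : IntervalIntegrable f volume a b :=
  (hf.integrableOn_isCompact isCompact_uIcc).intervalIntegrable

lemma aux_ac (f f' : ℝ → ℝ) (hf' : LocallyIntegrable f' volume)
    (hf : ∀ x : ℝ, f x = f 0 + ∫ s in (0:ℝ)..x, f' s) (x : ℝ) :
    AbsolutelyContinuousOnInterval f 0 x ∧ ∀ᵐ y, y ∈ Set.uIcc 0 x → HasDerivAt f (f' y) y := by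
  have hi : IntervalIntegrable f' volume 0 x := aux_ii hf'
  have e : f = (fun y => f 0 + ∫ s in (0:ℝ)..y, f' s) := funext hf
  constructor
  · have h1 := hi.absolutelyContinuousOnInterval_intervalIntegral (c := 0) (by simp)
    have h2 : AbsolutelyContinuousOnInterval (fun _ : ℝ => f 0) 0 x :=
      (LipschitzWith.const (f 0)).lipschitzOnWith.absolutelyContinuousOnInterval
    rw [e]
    exact h2.add h1
  · filter_upwards [hi.ae_hasDerivAt_integral] with y hy hyx
    have := (hy hyx 0 (by simp)).const_add (f 0)
    rw [e]
    exact this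

lemma aux_prod_real (f f' g g' : ℝ → ℝ) (hf' : LocallyIntegrable f' volume)
    (hf : ∀ x : ℝ, f x = f 0 + ∫ s in (0:ℝ)..x, f' s)
    (hg' : LocallyIntegrable g' volume)
    (hg : ∀ x : ℝ, g x = g 0 + ∫ s in (0:ℝ)..x, g' s) (x : ℝ) :
    f x * g x = f 0 * g 0 + ∫ s in (0:ℝ)..x, (f' s * g s + f s * g' s) := by
  obtain ⟨a1, d1⟩ := aux_ac f f' hf' hf x
  obtain ⟨a2, d2⟩ := aux_ac g g' hg' hg x
  have h := a1.integral_deriv_mul_eq_sub a2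
  have : ∫ s in (0:ℝ)..x, (f' s * g s + f s * g' s)
      = ∫ s in (0:ℝ)..x, (deriv f s * g s + f s * deriv g s) := by
    apply intervalIntegral.integral_congr_ae
    filter_upwards [d1, d2] with y h1 h2 hy
    have hy' := Set.uIoc_subset_uIcc hy
    rw [(h1 hy').deriv, (h2 hy').deriv]
  rw [this, h]; ring

lemma aux_li_re (f : ℝ → ℂ) (hf : LocallyIntegrable f volume) :
    LocallyIntegrable (fun x => (f x).re) volume := fun x => by
  obtain ⟨s, hs, h⟩ := hf x
  exact ⟨s, hs, h.re⟩

lemma aux_li_im (f : ℝ → ℂ) (hf : LocallyIntegrable f volume) :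
    LocallyIntegrable (fun x => (f x).im) volume := fun x => by
  obtain ⟨s, hs, h⟩ := hf x
  exact ⟨s, hs, h.im⟩

lemma aux_int_re (f : ℝ → ℂ) (hf : LocallyIntegrable f volume) (x : ℝ) :
    (∫ s in (0:ℝ)..x, f s).re = ∫ s in (0:ℝ)..x, (f s).re :=
  (Complex.reCLM.intervalIntegral_comp_comm (aux_ii hf (a := 0) (b := x))).symm

lemma aux_int_im (f : ℝ → ℂ) (hf : LocallyIntegrable f volume) (x : ℝ) :
    (∫ s in (0:ℝ)..x, f s).im = ∫ s in (0:ℝ)..x, (f s).im :=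
  (Complex.imCLM.intervalIntegral_comp_comm (aux_ii hf (a := 0) (b := x))).symm

lemma aux_cont (f f' : ℝ → ℂ) (hf' : LocallyIntegrable f' volume)
    (hf : ∀ x : ℝ, f x = f 0 + ∫ s in (0:ℝ)..x, f' s) : Continuous f := by
  have e : f = (fun y => f 0 + ∫ s in (0:ℝ)..y, f' s) := funext hf
  rw [e]
  exact continuous_const.add
    (intervalIntegral.continuous_primitive (fun a b => aux_ii hf') 0)

lemma aux_prod (φ : ℝ → ℝ) (hφ : ContDiff ℝ 1 φ) (f f' : ℝ → ℂ)
    (hf' : LocallyIntegrable f' volume)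
    (hf : ∀ x : ℝ, f x = f 0 + ∫ s in (0:ℝ)..x, f' s) :
    LocallyIntegrable
      (fun s => Complex.ofReal (deriv φ s) * f s + Complex.ofReal (φ s) * f' s) volume ∧
    ∀ x : ℝ, Complex.ofReal (φ x) * f x = Complex.ofReal (φ 0) * f 0 +
      ∫ s in (0:ℝ)..x, (Complex.ofReal (deriv φ s) * f s + Complex.ofReal (φ s) * f' s) := by
  have hfc := aux_cont f f' hf' hf
  have hdc : Continuous (deriv φ) := hφ.continuous_deriv le_rfl
  have hφc : Continuous φ := hφ.continuous
  have hli : LocallyIntegrable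
      (fun s => Complex.ofReal (deriv φ s) * f s + Complex.ofReal (φ s) * f' s) volume := by
    apply LocallyIntegrable.add
    · exact (by fun_prop : Continuous
        (fun s => Complex.ofReal (deriv φ s) * f s)).locallyIntegrable
    · exact hf'.continuous_mul (by fun_prop : Continuous (fun s => Complex.ofReal (φ s)))
  have hφi : ∀ x : ℝ, φ x = φ 0 + ∫ s in (0:ℝ)..x, deriv φ s := fun x => by
    rw [intervalIntegral.integral_deriv_eq_sub
      (fun y _ => hφ.differentiable one_ne_zero y) (hdc.intervalIntegrable _ _)]
    ring
  refine ⟨hli, fun x => ?_⟩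
  apply Complex.ext
  · have := aux_prod_real φ (deriv φ) (fun x => (f x).re) (fun x => (f' x).re)
      hdc.locallyIntegrable hφi (aux_li_re _ hf')
      (fun x => by
        rw [← aux_int_re _ hf', ← Complex.add_re, ← hf x]) x
    rw [Complex.add_re, aux_int_re _ hli]
    simpa using this
  · have := aux_prod_real φ (deriv φ) (fun x => (f x).im) (fun x => (f' x).im)
      hdc.locallyIntegrable hφi (aux_li_im _ hf')
      (fun x => by
        rw [← aux_int_im _ hf', ← Complex.add_im, ← hf x]) x
    rw [Complex.add_im, aux_int_im _ hli]
    simpa using this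

/-- a continuous compactly supported function times a locally `L²` function is `L²`. -/
lemma aux_memLp_mul (g Q : ℝ → ℂ) (hg : Continuous g) (hgc : HasCompactSupport g)
    (hQmeas : AEStronglyMeasurable Q volume)
    (hQ : LocallyIntegrable (fun s => ‖Q s‖ ^ 2) volume) :
    MemLp (fun x => g x * Q x) 2 volume := by
  refine (memLp_two_iff_integrable_sq_norm (hg.aestronglyMeasurable.mul hQmeas)).2 ?_
  have := hQ.integrable_smul_left_of_hasCompactSupport (g := fun x => ‖g x‖ ^ 2)
    (by fun_prop) (hgc.comp_left (g := fun z : ℂ => ‖z‖ ^ 2) (by simp))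
  refine this.congr (Eventually.of_forall fun x => ?_)
  simp [mul_pow]

lemma aux_memLp_bdd (g f : ℝ → ℂ) (hg : Continuous g) (hgc : HasCompactSupport g)
    (hf : MemLp f 2 volume) : MemLp (fun x => g x * f x) 2 volume := by
  have h : MemLp g ⊤ volume := hg.memLp_top_of_hasCompactSupport hgc _
  exact hf.mul h

/-- Multiplying by a smooth compactly supported cutoff `φ`: the product `φu` is again
locally absolutely continuous with quasi-derivative `φ'u + φw`, the latter is locally
absolutely continuous, and `l[φu] = φ l[u] - φ'' u - 2φ' u'`. In particular, if
`u, l[u] ∈ L²(ℝ)`, then `φu ∈ L²(ℝ)` has compact support and `l[φu] ∈ L²(ℝ)`,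
i.e. `φu` lies in the domain of the preminimal operator. -/
theorem cutoff_in_preminimal_domain (Q τ u w dw : ℝ → ℂ)
    (hQmeas : AEStronglyMeasurable Q volume)
    (hQ : LocallyIntegrable (fun s => ‖Q s‖ ^ 2) volume)
    (hτ : LocallyIntegrable τ volume)
    (hu' : LocallyIntegrable (fun s => w s + Q s * u s) volume)
    (hu : ∀ x : ℝ, u x = u 0 + ∫ s in (0:ℝ)..x, (w s + Q s * u s))
    (hdw : LocallyIntegrable dw volume)
    (hw : ∀ x : ℝ, w x = w 0 + ∫ s in (0:ℝ)..x, dw s)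
    (φ : ℝ → ℝ) (hφ : ContDiff ℝ (⊤ : ℕ∞) φ) (hφc : HasCompactSupport φ) :
    LocallyIntegrable (fun s => wPhi u w φ s + Q s * (Complex.ofReal (φ s) * u s)) volume ∧
    (∀ x : ℝ, Complex.ofReal (φ x) * u x =
        Complex.ofReal (φ 0) * u 0
          + ∫ s in (0:ℝ)..x, (wPhi u w φ s + Q s * (Complex.ofReal (φ s) * u s))) ∧
    LocallyIntegrable (dwPhi Q u w dw φ) volume ∧
    (∀ x : ℝ, wPhi u w φ x = wPhi u w φ 0 + ∫ s in (0:ℝ)..x, dwPhi Q u w dw φ s) ∧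
    (∀ x : ℝ, qdL Q τ (fun y => Complex.ofReal (φ y) * u y) (wPhi u w φ)
          (dwPhi Q u w dw φ) x =
        Complex.ofReal (φ x) * qdL Q τ u w dw x
          - Complex.ofReal (deriv (deriv φ) x) * u x
          - 2 * Complex.ofReal (deriv φ x) * (w x + Q x * u x)) ∧
    (MemLp u 2 volume → MemLp (qdL Q τ u w dw) 2 volume →
      MemLp (fun x => Complex.ofReal (φ x) * u x) 2 volume ∧
      HasCompactSupport (fun x => Complex.ofReal (φ x) * u x) ∧
      MemLp (qdL Q τ (fun y => Complex.ofReal (φ y) * u y) (wPhi u w φ)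
        (dwPhi Q u w dw φ)) 2 volume) := by
  have hφ1 : ContDiff ℝ 1 φ := hφ.of_le (by exact_mod_cast le_top)
  have hφ2 : ContDiff ℝ 2 φ :=
    contDiff_infty.1 hφ 2
  have hdφ1 : ContDiff ℝ 1 (deriv φ) := by
    have : ContDiff ℝ (1 + 1) φ := by simpa [one_add_one_eq_two] using hφ2
    exact (contDiff_succ_iff_deriv.1 this).2.2
  have hucont := aux_cont u _ hu' hu
  have hwcont := aux_cont w _ hdw hw
  obtain ⟨a1, a2⟩ := aux_prod φ hφ1 u _ hu' hu
  obtain ⟨b1, b2⟩ := aux_prod (deriv φ) hdφ1 u _ hu' hu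
  obtain ⟨c1, c2⟩ := aux_prod φ hφ1 w _ hdw hw
  have e1 : (fun s => wPhi u w φ s + Q s * (Complex.ofReal (φ s) * u s)) =
      fun s => Complex.ofReal (deriv φ s) * u s + Complex.ofReal (φ s) * (w s + Q s * u s) := by
    funext s; simp only [wPhi]; ring
  have e2 : dwPhi Q u w dw φ = fun s =>
      (Complex.ofReal (deriv (deriv φ) s) * u s
        + Complex.ofReal (deriv φ s) * (w s + Q s * u s))
      + (Complex.ofReal (deriv φ s) * w s + Complex.ofReal (φ s) * dw s) := by
    funext s; simp only [dwPhi]; ring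
  have e3 : ∀ x : ℝ, qdL Q τ (fun y => Complex.ofReal (φ y) * u y) (wPhi u w φ)
          (dwPhi Q u w dw φ) x =
        Complex.ofReal (φ x) * qdL Q τ u w dw x
          - Complex.ofReal (deriv (deriv φ) x) * u x
          - 2 * Complex.ofReal (deriv φ x) * (w x + Q x * u x) := by
    intro x; simp only [qdL, wPhi, dwPhi]; ring
  have k0 : HasCompactSupport (fun x => Complex.ofReal (φ x)) :=
    hφc.comp_left Complex.ofReal_zero
  have k1 : HasCompactSupport (fun x => Complex.ofReal (deriv φ x)) :=
    hφc.deriv.comp_left Complex.ofReal_zero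
  have k2 : HasCompactSupport (fun x => Complex.ofReal (deriv (deriv φ) x)) :=
    hφc.deriv.deriv.comp_left Complex.ofReal_zero
  have n0 : Continuous (fun x => Complex.ofReal (φ x)) :=
    Complex.continuous_ofReal.comp hφ1.continuous
  have n1 : Continuous (fun x => Complex.ofReal (deriv φ x)) :=
    Complex.continuous_ofReal.comp hdφ1.continuous
  have n2 : Continuous (fun x => Complex.ofReal (deriv (deriv φ) x)) :=
    Complex.continuous_ofReal.comp (hdφ1.continuous_deriv le_rfl)
  refine ⟨?_, ?_, ?_, ?_, e3, ?_⟩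
  · rw [e1]; exact a1
  · intro x; rw [e1]; exact a2 x
  · rw [e2]; exact b1.add c1
  · intro x
    rw [e2, intervalIntegral.integral_add (aux_ii b1) (aux_ii c1)]
    simp only [wPhi]
    rw [b2 x, c2 x]; ring
  · intro hu2 hl2
    refine ⟨aux_memLp_bdd _ _ n0 k0 hu2, k0.mul_right, ?_⟩
    have m1 := aux_memLp_bdd _ _ n0 k0 hl2
    have m2 := aux_memLp_bdd _ _ n2 k2 hu2
    have m3 : MemLp (fun x => Complex.ofReal (deriv φ x) * w x) 2 volume :=
      (n1.mul hwcont).memLp_of_hasCompactSupport k1.mul_right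
    have m4 : MemLp (fun x => (Complex.ofReal (deriv φ x) * u x) * Q x) 2 volume :=
      aux_memLp_mul _ _ (n1.mul hucont) k1.mul_right hQmeas hQ
    have m5 := (m1.sub m2).sub ((m3.add m4).const_mul 2)
    refine (memLp_congr_ae (Eventually.of_forall fun x => ?_)).1 m5
    rw [e3]
    simp only [Pi.sub_apply, Pi.add_apply]
    ring
end

section
/- Let v ∈ L²(ℝ,ℂ) be locally square-integrable and suppose that for every real-valued smooth compactly supported function φ : ℝ → ℝ one has ∫_ℝ (φ'(x))² |v(x)|² dx ≥ ∫_ℝ φ(x)² |v(x)|² dx. Then v = 0 almost everywhere. -/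
open MeasureTheory

/-- Vanishing lemma: if `v ∈ L²(ℝ)` satisfies `∫ (φ')²|v|² ≥ ∫ φ²|v|²` for every real-valued
smooth compactly supported `φ`, then `v = 0` almost everywhere. -/
theorem vanishing_lemma (v : ℝ → ℂ) (hv : MemLp v 2 volume)
    (h : ∀ φ : ℝ → ℝ, ContDiff ℝ (⊤ : ℕ∞) φ → HasCompactSupport φ →
      (∫ x : ℝ, φ x ^ 2 * ‖v x‖ ^ 2) ≤ ∫ x : ℝ, deriv φ x ^ 2 * ‖v x‖ ^ 2) :
    v =ᵐ[volume] 0 := by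
  have hint : Integrable (fun x => ‖v x‖ ^ 2) volume := hv.integrable_norm_pow (by norm_num)
  let f : ContDiffBump (0 : ℝ) := ⟨1, 2, by norm_num, by norm_num⟩
  have hf : ContDiff ℝ (⊤ : ℕ∞) f := f.contDiff
  have hfc : Continuous f := f.continuous
  have hfd : Continuous (deriv f) := hf.continuous_deriv (by simp)
  have hfs : HasCompactSupport f := f.hasCompactSupport
  obtain ⟨C, hC⟩ := hfs.deriv.exists_bound_of_continuous hfd
  have hf0 : f 0 = 1 := f.one_of_mem_closedBall (by simp [f])
  let a : ℕ → ℝ := fun n => 1 / ((n : ℝ) + 1)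
  have ha : Filter.Tendsto a Filter.atTop (nhds 0) := tendsto_one_div_add_atTop_nhds_zero_nat
  have hapos : ∀ n, 0 < a n := fun n => by positivity
  have hale : ∀ n, a n ≤ 1 := fun n => by
    have : (0 : ℝ) ≤ n := Nat.cast_nonneg n
    exact (div_le_one (by positivity)).2 (by linarith)
  have hder : ∀ n x, deriv (fun x => f (a n * x)) x = a n * deriv f (a n * x) := by
    intro n x
    simpa using deriv_comp_mul_left (a n) f x
  have hineq : ∀ n, (∫ x : ℝ, f (a n * x) ^ 2 * ‖v x‖ ^ 2) ≤
      ∫ x : ℝ, (a n * deriv f (a n * x)) ^ 2 * ‖v x‖ ^ 2 := by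
    intro n
    have := h (fun x => f (a n * x)) (hf.comp (contDiff_const.mul contDiff_id))
      (hfs.comp_homeomorph (Homeomorph.mulLeft₀ (a n) (hapos n).ne'))
    simpa only [hder] using this
  have hax : ∀ x : ℝ, Filter.Tendsto (fun n => a n * x) Filter.atTop (nhds 0) := fun x => by
    simpa using ha.mul_const x
  have h1 : Filter.Tendsto (fun n => ∫ x : ℝ, f (a n * x) ^ 2 * ‖v x‖ ^ 2) Filter.atTop
      (nhds (∫ x : ℝ, ‖v x‖ ^ 2)) := by
    refine tendsto_integral_of_dominated_convergence (fun x => ‖v x‖ ^ 2) ?_ hint ?_ ?_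
    · intro n
      exact (Continuous.aestronglyMeasurable (by fun_prop)).mul hint.aestronglyMeasurable
    · intro n
      refine Filter.Eventually.of_forall fun x => ?_
      rw [norm_mul, norm_pow, norm_pow, norm_norm, Real.norm_of_nonneg f.nonneg]
      exact mul_le_of_le_one_left (by positivity) (pow_le_one₀ f.nonneg f.le_one)
    · refine Filter.Eventually.of_forall fun x => ?_
      have := (((hfc.tendsto 0).comp (hax x)).pow 2).mul_const (‖v x‖ ^ 2)
      simpa [hf0] using this
  have h2 : Filter.Tendsto (fun n => ∫ x : ℝ, (a n * deriv f (a n * x)) ^ 2 * ‖v x‖ ^ 2)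
      Filter.atTop (nhds (∫ _x : ℝ, (0 : ℝ))) := by
    refine tendsto_integral_of_dominated_convergence (fun x => C ^ 2 * ‖v x‖ ^ 2) ?_
      (hint.const_mul _) ?_ ?_
    · intro n
      exact (Continuous.aestronglyMeasurable (by fun_prop)).mul hint.aestronglyMeasurable
    · intro n
      refine Filter.Eventually.of_forall fun x => ?_
      rw [norm_mul, norm_pow, norm_pow, norm_norm, norm_mul, Real.norm_of_nonneg (hapos n).le]
      have : a n * ‖deriv f (a n * x)‖ ≤ C :=
        (mul_le_of_le_one_left (norm_nonneg _) (hale n)).trans (hC _)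
      have h0 : 0 ≤ a n * ‖deriv f (a n * x)‖ := mul_nonneg (hapos n).le (norm_nonneg _)
      gcongr
    · refine Filter.Eventually.of_forall fun x => ?_
      have := ((ha.mul ((hfd.tendsto 0).comp (hax x))).pow 2).mul_const (‖v x‖ ^ 2)
      simpa using this
  have hle : (∫ x : ℝ, ‖v x‖ ^ 2) ≤ 0 := by
    simpa using le_of_tendsto_of_tendsto' h1 h2 hineq
  have hz : (∫ x : ℝ, ‖v x‖ ^ 2) = 0 := le_antisymm hle (integral_nonneg fun x => by positivity)
  have := (integral_eq_zero_iff_of_nonneg (fun x => by positivity) hint).1 hz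
  filter_upwards [this] with x hx
  simpa using hx
end
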